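/- arXiv:2404.15230 — 2 statements merged into one kernel-verified Lean document; each statement's English description precedes it below -/
import Mathlib

section
/- Let δ be an ordinal and ⟨P_i : i ∈ I⟩ a family of partial orders, each with a greatest element and each strongly δ-strategically closed. Then the full-support product ∏_{i∈I} P_i, ordered coordinatewise, is strongly δ-strategically closed. -/
universe u

/-- An ordinal is *odd* if it is of the form `2 * β + 1`, i.e. `λ + (2n+1)` with `λ`
limit or zero and `n < ω`. (Here `2 * β` denotes `β` copies of `2`, so limits are even.) -/
def Ordinal.IsOddO (α : Ordinal) : Prop := ∃ β : Ordinal, α = 2 * β + 1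

/-- A partial order `P` is *strongly `δ`-strategically closed* if COM has a winning
strategy in the variant of the completeness game of length `δ` in which COM plays at odd
ordinals and INC plays at even ordinals.  A strategy for COM is a function `σ` assigning
to each position (a stage `α` together with the sequence of moves played so far) an
element of `P`; it is winning if, in every legal partial play of length `α < δ` in which
COM has followed `σ` (each move being a lower bound of all previous moves), the player
whose turn it is at stage `α` has a legal move — in particular at odd `α` the move
prescribed by `σ` is a lower bound of all previous moves. -/
def StronglyStrategicallyClosed (δ : Ordinal) (P : Type u) [Preorder P] : Prop :=
  ∃ σ : (α : Ordinal) → ((β : Ordinal) → β < α → P) → P,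
    ∀ α < δ, ∀ f : (β : Ordinal) → β < α → P,
      (∀ (β : Ordinal) (hβ : β < α) (γ : Ordinal) (hγ : γ < α), γ < β → f β hβ ≤ f γ hγ) →
      (∀ (β : Ordinal) (hβ : β < α), β.IsOddO →
        f β hβ = σ β (fun γ hγ => f γ (hγ.trans hβ))) →
      ((α.IsOddO → ∀ (β : Ordinal) (hβ : β < α), σ α f ≤ f β hβ) ∧
        (¬ α.IsOddO → ∃ p : P, ∀ (β : Ordinal) (hβ : β < α), p ≤ f β hβ))

/-- The full-support product of a family of partial orders with greatest elements, each
strongly `δ`-strategically closed, is strongly `δ`-strategically closed. -/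
theorem stronglyStrategicallyClosed_pi {I : Type u} (P : I → Type u)
    [∀ i, PartialOrder (P i)] [∀ i, OrderTop (P i)] (δ : Ordinal)
    (h : ∀ i, StronglyStrategicallyClosed δ (P i)) :
    StronglyStrategicallyClosed δ (∀ i, P i) := by
  choose σ hσ using h
  refine ⟨fun α f i => σ i α (fun β hβ => f β hβ i), ?_⟩
  intro α hα f hdesc hfol
  have key := fun i => hσ i α hα (fun β hβ => f β hβ i)
    (fun β hβ γ hγ hlt => hdesc β hβ γ hγ hlt i)
    (fun β hβ hodd => congrFun (hfol β hβ hodd) i)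
  refine ⟨fun hodd β hβ i => (key i).1 hodd β hβ, fun heven => ?_⟩
  choose p hp using fun i => (key i).2 heven
  exact ⟨p, fun β hβ i => hp i β hβ⟩
end

section
/- Let τ < κ be infinite regular cardinals such that λ^{<τ} < κ for every cardinal λ < κ. Then for every family ⟨a_i : i<κ⟩ of sets with |a_i| < τ for all i < κ, there exist a set I ⊆ κ of cardinality κ and a set r (the root) such that a_i ∩ a_j = r for all distinct i, j ∈ I. -/
universe u

open Cardinal Set in
/-- Fewer than `κ` many subsets of size `< τ` of a set of size `< κ`. -/
theorem delta_small_subsets {α : Type u} (τ κ : Cardinal.{u})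
    (hτ : τ.IsRegular) (hκ : κ.IsRegular) (hlt : τ < κ)
    (hpow : ∀ l : Cardinal.{u}, l < κ → l ^< τ < κ) (S : Set α) (hS : #S < κ) :
    #{r : Set α | r ⊆ S ∧ #r < τ} < κ := by
  have hsub : {r : Set α | r ⊆ S ∧ #r < τ} ⊆
      ⋃ a : τ.ord.ToType, {r : Set α | r ⊆ S ∧ #r ≤ #(Iio a)} := by
    rintro r ⟨hr, hrτ⟩
    have h1 : (#r).ord < Ordinal.type (α := τ.ord.ToType) (· < ·) := by
      rw [Ordinal.type_toType]; exact Cardinal.ord_lt_ord.2 hrτ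
    refine mem_iUnion.2 ⟨Ordinal.enum (α := τ.ord.ToType) (· < ·) ⟨_, h1⟩, hr, ?_⟩
    have h2 := Ordinal.typein_enum (α := τ.ord.ToType) (· < ·) h1
    have h3 := congrArg Ordinal.card h2
    rw [Cardinal.card_ord] at h3
    exact h3.symm.le
  refine (mk_le_mk_of_subset hsub).trans_lt ?_
  rw [card_iUnion_lt_iff_forall_of_isRegular hκ (by simpa using hlt)]
  intro a
  have ha : #(Iio a) < τ := Cardinal.mk_Iio_toType_ord_lt a
  refine (mk_bounded_subset_le S _).trans_lt ?_
  refine (le_powerlt _ ha).trans_lt (hpow _ ?_)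
  exact max_lt hS (hτ.aleph0_le.trans_lt hlt)

open Cardinal Set in
/-- Closing off under an operation `B` on small sets. -/
theorem delta_closure {α : Type u} (τ κ : Cardinal.{u})
    (hτ : τ.IsRegular) (hκ : κ.IsRegular) (hlt : τ < κ)
    (hpow : ∀ l : Cardinal.{u}, l < κ → l ^< τ < κ)
    (B : Set α → Set α) (hB : ∀ r : Set α, #r < τ → #(B r) < κ) :
    ∃ X : Set α, #X < κ ∧ ∀ r : Set α, r ⊆ X → #r < τ → B r ⊆ X := by
  let G : Set α → Set α := fun S => ⋃ r ∈ {r : Set α | r ⊆ S ∧ #r < τ}, B r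
  have hG : ∀ S : Set α, #S < κ → #(G S) < κ := by
    intro S hS
    refine (card_biUnion_lt_iff_forall_of_isRegular hκ
      (delta_small_subsets τ κ hτ hκ hlt hpow S hS)).2 ?_
    intro r hr
    exact hB r hr.2
  let F : (a : τ.ord.ToType) → ((b : τ.ord.ToType) → b < a → Set α) → Set α :=
    fun a ih => ⋃ b : Iio a, G (ih b.1 b.2)
  let X : τ.ord.ToType → Set α := (wellFounded_lt (α := τ.ord.ToType)).fix F
  have hX : ∀ a, X a = ⋃ b : Iio a, G (X b.1) := fun a => WellFounded.fix_eq _ F a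
  have hcof : Order.cof τ.ord.ToType = τ := by
    rw [Ordinal.cof_toType, hτ.cof_ord]
  have hbdd : ∀ s : Set τ.ord.ToType, #s < τ → ∃ b, ∀ a ∈ s, a < b := by
    intro s hs
    have : ¬ IsCofinal s := fun h => by
      have := Order.cof_le h
      rw [hcof] at this
      exact absurd hs this.not_gt
    simpa [IsCofinal] using this
  have hXc : ∀ a, #(X a) < κ := by
    intro a
    induction a using WellFoundedLT.induction with
    | ind a ih =>
      rw [hX, card_iUnion_lt_iff_forall_of_isRegular hκ
        ((Cardinal.mk_Iio_toType_ord_lt a).trans hlt)]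
      exact fun b => hG _ (ih b.1 b.2)
  have hmono : ∀ a b, a ≤ b → X a ⊆ X b := by
    intro a b hab
    rw [hX a, hX b]
    refine iUnion_subset fun c => ?_
    exact subset_iUnion (fun d : Iio b => G (X d.1)) ⟨c.1, lt_of_lt_of_le c.2 hab⟩
  refine ⟨⋃ a, X a, ?_, ?_⟩
  · rw [card_iUnion_lt_iff_forall_of_isRegular hκ (by simpa using hlt)]
    exact hXc
  · intro r hr hrτ
    have hch : ∀ x : r, ∃ a, x.1 ∈ X a := fun x => mem_iUnion.1 (hr x.2)
    choose f hf using hch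
    obtain ⟨b, hb⟩ := hbdd (range f) (mk_range_le.trans_lt hrτ)
    obtain ⟨c, hc⟩ := hbdd {b} (by
      rw [mk_singleton]; exact one_lt_aleph0.trans_le hτ.aleph0_le)
    have hrb : r ⊆ X b := fun x hx => hmono _ _ (hb _ ⟨⟨x, hx⟩, rfl⟩).le (hf ⟨x, hx⟩)
    have h1 : B r ⊆ G (X b) :=
      subset_biUnion_of_mem (u := fun r => B r) (show r ∈ {r : Set α | r ⊆ X b ∧ #r < τ} from ⟨hrb, hrτ⟩)
    refine h1.trans (Subset.trans ?_ (subset_iUnion X c))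
    rw [hX c]
    exact subset_iUnion (fun d : Iio c => G (X d.1)) ⟨b, hc b rfl⟩

open Cardinal Set in
/-- Maximal Δ-systems with a given root. -/
theorem delta_maximal {ι α : Type u} (A : ι → Set α) (r : Set α) :
    ∃ J : Set ι, (∀ i ∈ J, r ⊆ A i) ∧ (∀ i ∈ J, ∀ j ∈ J, i ≠ j → A i ∩ A j = r) ∧
      ∀ i, r ⊆ A i → (∀ j ∈ J, A i ∩ A j = r) → i ∈ J := by
  obtain ⟨J, hJ⟩ := zorn_subset
    {J : Set ι | (∀ i ∈ J, r ⊆ A i) ∧ (∀ i ∈ J, ∀ j ∈ J, i ≠ j → A i ∩ A j = r)} (by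
      intro c hc hchain
      refine ⟨⋃₀ c, ⟨?_, ?_⟩, fun s hs => subset_sUnion_of_mem hs⟩
      · rintro i ⟨s, hs, his⟩
        exact (hc hs).1 i his
      · rintro i ⟨s, hs, his⟩ j ⟨t, ht, hjt⟩ hij
        rcases hchain.total hs ht with h | h
        · exact (hc ht).2 i (h his) j hjt hij
        · exact (hc hs).2 i his j (h hjt) hij)
  refine ⟨J, hJ.prop.1, hJ.prop.2, fun i hi hij => ?_⟩
  refine hJ.le_of_ge (y := insert i J) ⟨?_, ?_⟩ (subset_insert _ _) (mem_insert _ _)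
  · rintro k (rfl | hk)
    · exact hi
    · exact hJ.prop.1 k hk
  · rintro k (rfl | hk) l (rfl | hl) hkl
    · exact absurd rfl hkl
    · exact hij l hl
    · rw [inter_comm]; exact hij k hk
    · exact hJ.prop.2 k hk l hl hkl

/-- The generalized Δ-system lemma: if `τ < κ` are infinite regular cardinals with
`λ ^< τ < κ` for every `λ < κ`, then every family of `κ` many sets each of cardinality
`< τ` contains a subfamily of cardinality `κ` forming a Δ-system with some root `r`. -/
theorem delta_system_lemma {ι α : Type u} (τ κ : Cardinal.{u})
    (hτ : τ.IsRegular) (hκ : κ.IsRegular) (hlt : τ < κ)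
    (hpow : ∀ l : Cardinal.{u}, l < κ → l ^< τ < κ)
    (hι : Cardinal.mk ι = κ) (A : ι → Set α) (hA : ∀ i : ι, Cardinal.mk (A i) < τ) :
    ∃ I : Set ι, Cardinal.mk I = κ ∧ ∃ r : Set α,
      ∀ i ∈ I, ∀ j ∈ I, i ≠ j → A i ∩ A j = r := by
  choose J hJ1 hJ2 hJ3 using delta_maximal A
  by_contra hcon
  have hJc : ∀ r, Cardinal.mk (J r) < κ := by
    intro r
    refine lt_of_le_of_ne (hι ▸ Cardinal.mk_set_le (J r)) fun h => ?_
    exact hcon ⟨J r, h, r, hJ2 r⟩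
  obtain ⟨X, hXc, hX⟩ := delta_closure τ κ hτ hκ hlt hpow (fun r => ⋃ j ∈ J r, A j) (by
    intro r _
    refine (Cardinal.card_biUnion_lt_iff_forall_of_isRegular hκ (hJc r)).2 ?_
    exact fun j _ => (hA j).trans hlt)
  have hU : Cardinal.mk (⋃ r ∈ {r : Set α | r ⊆ X ∧ Cardinal.mk r < τ}, J r : Set ι) < κ :=
    (Cardinal.card_biUnion_lt_iff_forall_of_isRegular hκ
      (delta_small_subsets τ κ hτ hκ hlt hpow X hXc)).2 fun r _ => hJc r
  obtain ⟨i, hi⟩ : ∃ i, i ∉ (⋃ r ∈ {r : Set α | r ⊆ X ∧ Cardinal.mk r < τ}, J r : Set ι) := by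
    by_contra! hall
    rw [Set.eq_univ_of_forall hall, Cardinal.mk_univ, hι] at hU
    exact lt_irrefl _ hU
  have hr : Cardinal.mk (A i ∩ X : Set α) < τ :=
    (Cardinal.mk_le_mk_of_subset Set.inter_subset_left).trans_lt (hA i)
  have hrX : A i ∩ X ⊆ X := Set.inter_subset_right
  refine hi (Set.mem_biUnion (show A i ∩ X ∈ {r : Set α | r ⊆ X ∧ Cardinal.mk r < τ} from
    ⟨hrX, hr⟩) ?_)
  refine hJ3 _ i Set.inter_subset_left fun j hj => ?_
  refine Set.Subset.antisymm ?_ ?_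
  · rintro x ⟨hx1, hx2⟩
    exact ⟨hx1, hX _ hrX hr (Set.mem_biUnion hj hx2)⟩
  · intro x hx
    exact ⟨hx.1, hJ1 _ j hj hx⟩
end
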